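/- Hyperbolic balls of equal radius have equal hyperbolic volume: for every n ≥ 1, every point x in the open unit ball B ⊂ ℝ^n, and every r > 0, one has μ_n({y ∈ B : d_K(x, y) < r}) = μ_n({y ∈ B : d_K(0, y) < r}). -/

import Mathlib

open MeasureTheory Metric Set
open scoped RealInnerProductSpace

/-- Hyperbolic volume in the Klein model: Lebesgue measure with density
`x ↦ (1 - ‖x‖²)^{-(n+1)/2}`, restricted to the open unit ball. -/
noncomputable def hypVol (n : ℕ) : Measure (EuclideanSpace ℝ (Fin n)) :=
  (((volume : Measure (EuclideanSpace ℝ (Fin n)))).restrict (ball 0 1)).withDensity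
    fun x => ENNReal.ofReal ((1 - ‖x‖ ^ 2) ^ (-((n : ℝ) + 1) / 2))

/-- Inverse hyperbolic cosine. -/
noncomputable def arcosh (x : ℝ) : ℝ := Real.log (x + Real.sqrt (x ^ 2 - 1))

/-- The hyperbolic distance in the Klein model. -/
noncomputable def dK {n : ℕ} (x y : EuclideanSpace ℝ (Fin n)) : ℝ :=
  arcosh ((1 - ⟪x, y⟫) / Real.sqrt ((1 - ‖x‖ ^ 2) * (1 - ‖y‖ ^ 2)))

lemma one_sub_norm_sq_pos {E : Type*} [SeminormedAddCommGroup E] {a : E} (ha : ‖a‖ < 1) :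
    0 < 1 - ‖a‖ ^ 2 := by
  nlinarith [norm_nonneg a]

section KleinInvolution

variable {E : Type*} [NormedAddCommGroup E] [InnerProductSpace ℝ E]

/-- The isometric involution of the Klein ball exchanging `0` and `a`. -/
noncomputable def kleinInvolution (a y : E) : E :=
  (1 - ⟪a, y⟫)⁻¹ • (a - (√(1 - ‖a‖ ^ 2) • y + (⟪a, y⟫ / (1 + √(1 - ‖a‖ ^ 2))) • a))

lemma one_sub_inner_pos {a y : E} (ha : ‖a‖ < 1) (hy : ‖y‖ < 1) : 0 < 1 - ⟪a, y⟫ := by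
  nlinarith [real_inner_le_norm a y, norm_nonneg a, norm_nonneg y]

lemma kleinInvolution_zero (a : E) : kleinInvolution a 0 = a := by
  simp [kleinInvolution]

lemma one_sub_inner_kleinInvolution_kleinInvolution {a y z : E} (ha : ‖a‖ < 1) (hy : ‖y‖ < 1)
    (hz : ‖z‖ < 1) : 1 - ⟪kleinInvolution a y, kleinInvolution a z⟫ =
      (1 - ‖a‖ ^ 2) * (1 - ⟪y, z⟫) / ((1 - ⟪a, y⟫) * (1 - ⟪a, z⟫)) := by
  have hs := Real.sqrt_pos.2 (one_sub_norm_sq_pos ha)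
  have hsq := Real.sq_sqrt (one_sub_norm_sq_pos ha).le
  have hp := one_sub_inner_pos ha hy
  have hq := one_sub_inner_pos ha hz
  simp only [kleinInvolution, inner_smul_left, inner_smul_right, inner_sub_left, inner_sub_right,
    inner_add_left, inner_add_right, real_inner_self_eq_norm_sq, real_inner_comm a y,
    RCLike.conj_to_real]
  generalize √(1 - ‖a‖ ^ 2) = s at *
  generalize ⟪a, y⟫ = p at *
  generalize ⟪a, z⟫ = q at *
  generalize ⟪y, z⟫ = t at *
  obtain hA : ‖a‖ ^ 2 = 1 - s ^ 2 := by linarith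
  rw [hA]
  field_simp
  ring

lemma one_sub_norm_sq_kleinInvolution {a y : E} (ha : ‖a‖ < 1) (hy : ‖y‖ < 1) :
    1 - ‖kleinInvolution a y‖ ^ 2 = (1 - ‖a‖ ^ 2) * (1 - ‖y‖ ^ 2) / (1 - ⟪a, y⟫) ^ 2 := by
  rw [← real_inner_self_eq_norm_sq, one_sub_inner_kleinInvolution_kleinInvolution ha hy hy,
    real_inner_self_eq_norm_sq, sq (1 - ⟪a, y⟫)]

lemma one_sub_inner_kleinInvolution {a y : E} (ha : ‖a‖ < 1) (hy : ‖y‖ < 1) :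
    1 - ⟪a, kleinInvolution a y⟫ = (1 - ‖a‖ ^ 2) / (1 - ⟪a, y⟫) := by
  simpa [kleinInvolution_zero] using
    one_sub_inner_kleinInvolution_kleinInvolution ha (norm_zero.trans_lt one_pos) hy

lemma norm_kleinInvolution_lt_one {a y : E} (ha : ‖a‖ < 1) (hy : ‖y‖ < 1) :
    ‖kleinInvolution a y‖ < 1 := by
  have h : 0 < 1 - ‖kleinInvolution a y‖ ^ 2 := by
    rw [one_sub_norm_sq_kleinInvolution ha hy]
    have := one_sub_norm_sq_pos ha
    have := one_sub_norm_sq_pos hy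
    have := one_sub_inner_pos ha hy
    positivity
  nlinarith [norm_nonneg (kleinInvolution a y)]

lemma kleinInvolution_kleinInvolution {a y : E} (ha : ‖a‖ < 1) (hy : ‖y‖ < 1) :
    kleinInvolution a (kleinInvolution a y) = y := by
  have hs := Real.sqrt_pos.2 (one_sub_norm_sq_pos ha)
  have hsq := Real.sq_sqrt (one_sub_norm_sq_pos ha).le
  have hp := one_sub_inner_pos ha hy
  have hi := one_sub_inner_kleinInvolution ha hy
  rw [← hsq] at hi
  have hi' : ⟪a, kleinInvolution a y⟫ = 1 - √(1 - ‖a‖ ^ 2) ^ 2 / (1 - ⟪a, y⟫) := by linarith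
  rw [kleinInvolution, hi, hi', kleinInvolution]
  clear hi hi' hsq
  generalize √(1 - ‖a‖ ^ 2) = s at *
  generalize ⟪a, y⟫ = p at *
  match_scalars
  · field_simp
    ring
  · field_simp

lemma injOn_kleinInvolution {a : E} (ha : ‖a‖ < 1) : InjOn (kleinInvolution a) (ball 0 1) :=
  LeftInvOn.injOn (f₁' := kleinInvolution a) fun _ hy =>
    kleinInvolution_kleinInvolution ha (mem_ball_zero_iff.1 hy)

/-- The derivative of `kleinInvolution a` at `y`, a rank-one perturbation
of a multiple of the identity. -/
noncomputable def kleinInvolutionFDeriv (a y : E) : E →L[ℝ] E :=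
  (-(√(1 - ‖a‖ ^ 2) / (1 - ⟪a, y⟫))) • (ContinuousLinearMap.id ℝ E +
    (innerSL ℝ a).smulRight ((√(1 - ‖a‖ ^ 2))⁻¹ •
      ((1 + √(1 - ‖a‖ ^ 2))⁻¹ • a - kleinInvolution a y)))

lemma hasFDerivAt_kleinInvolution {a y : E} (ha : ‖a‖ < 1) (hy : ‖y‖ < 1) :
    HasFDerivAt (kleinInvolution a) (kleinInvolutionFDeriv a y) y := by
  have hs := Real.sqrt_pos.2 (one_sub_norm_sq_pos ha)
  have hp := one_sub_inner_pos ha hy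
  have hin : HasFDerivAt (fun z => ⟪a, z⟫) (innerSL ℝ a) y := (innerSL ℝ a).hasFDerivAt
  have hw := (hasDerivAt_inv hp.ne').comp_hasFDerivAt y (hin.const_sub 1)
  have hL := (((hasFDerivAt_id y).const_smul (√(1 - ‖a‖ ^ 2))).add
    ((hin.mul_const ((1 + √(1 - ‖a‖ ^ 2))⁻¹)).smul_const a)).const_sub a
  refine (hw.smul hL).congr_fderiv ?_
  ext1 h
  simp only [kleinInvolutionFDeriv, kleinInvolution, add_apply,
    smul_apply, ContinuousLinearMap.smulRight_apply,
    neg_apply, ContinuousLinearMap.id_apply, innerSL_apply_apply,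
    Function.comp_apply, Pi.add_apply, Pi.smul_apply, id]
  generalize √(1 - ‖a‖ ^ 2) = s at *
  generalize ⟪a, y⟫ = p at *
  generalize ⟪a, h⟫ = q at *
  match_scalars <;> (simp; field_simp)
  ring

lemma det_kleinInvolutionFDeriv [FiniteDimensional ℝ E] {a y : E} (ha : ‖a‖ < 1)
    (hy : ‖y‖ < 1) : |(kleinInvolutionFDeriv a y).det| =
      (√(1 - ‖a‖ ^ 2) / (1 - ⟪a, y⟫)) ^ (Module.finrank ℝ E + 1) := by
  have hs := Real.sqrt_pos.2 (one_sub_norm_sq_pos ha)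
  have hsq := Real.sq_sqrt (one_sub_norm_sq_pos ha).le
  have hp := one_sub_inner_pos ha hy
  have hi := one_sub_inner_kleinInvolution ha hy
  have h : (kleinInvolutionFDeriv a y : E →ₗ[ℝ] E) = (-(√(1 - ‖a‖ ^ 2) / (1 - ⟪a, y⟫))) •
      LinearMap.transvection (innerSL ℝ a : E →ₗ[ℝ] ℝ) ((√(1 - ‖a‖ ^ 2))⁻¹ •
        ((1 + √(1 - ‖a‖ ^ 2))⁻¹ • a - kleinInvolution a y)) := by
    ext z
    simp [kleinInvolutionFDeriv, LinearMap.transvection.apply, add_comm]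
  have hd : 1 + ⟪a, (√(1 - ‖a‖ ^ 2))⁻¹ • ((1 + √(1 - ‖a‖ ^ 2))⁻¹ • a - kleinInvolution a y)⟫ =
      √(1 - ‖a‖ ^ 2) / (1 - ⟪a, y⟫) := by
    rw [inner_smul_right, inner_sub_right, inner_smul_right, real_inner_self_eq_norm_sq]
    rw [← hsq] at hi
    have hi' : ⟪a, kleinInvolution a y⟫ = 1 - √(1 - ‖a‖ ^ 2) ^ 2 / (1 - ⟪a, y⟫) := by linarith
    have hA : ‖a‖ ^ 2 = 1 - √(1 - ‖a‖ ^ 2) ^ 2 := by linarith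
    rw [hi']
    generalize √(1 - ‖a‖ ^ 2) = s at *
    rw [hA]
    field_simp
    ring
  rw [ContinuousLinearMap.det, h, LinearMap.det_smul, LinearMap.transvection.det,
    ContinuousLinearMap.coe_coe, innerSL_apply_apply, hd, abs_mul, abs_pow, abs_neg,
    abs_of_pos (div_pos hs hp), ← pow_succ]

end KleinInvolution

lemma hypVol_apply {n : ℕ} {S : Set (EuclideanSpace ℝ (Fin n))} (hS : MeasurableSet S)
    (hSB : S ⊆ ball 0 1) : hypVol n S =
      ∫⁻ y in S, ENNReal.ofReal ((1 - ‖y‖ ^ 2) ^ (-((n : ℝ) + 1) / 2)) := by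
  rw [hypVol, withDensity_apply _ hS, Measure.restrict_restrict hS, inter_eq_left.2 hSB]

lemma hypVol_image_kleinInvolution {n : ℕ} {a : EuclideanSpace ℝ (Fin n)} (ha : ‖a‖ < 1)
    {S : Set (EuclideanSpace ℝ (Fin n))} (hS : MeasurableSet S) (hSB : S ⊆ ball 0 1) :
    hypVol n (kleinInvolution a '' S) = hypVol n S := by
  have hlt : ∀ y ∈ S, ‖y‖ < 1 := fun y hy => mem_ball_zero_iff.1 (hSB hy)
  have hderiv : ∀ y ∈ S,
      HasFDerivWithinAt (kleinInvolution a) (kleinInvolutionFDeriv a y) S y :=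
    fun y hy => (hasFDerivAt_kleinInvolution ha (hlt y hy)).hasFDerivWithinAt
  have hinj := (injOn_kleinInvolution ha).mono hSB
  have himg : kleinInvolution a '' S ⊆ ball 0 1 := by
    rintro _ ⟨y, hy, rfl⟩
    exact mem_ball_zero_iff.2 (norm_kleinInvolution_lt_one ha (hlt y hy))
  rw [hypVol_apply (measurable_image_of_fderivWithin hS hderiv hinj) himg, hypVol_apply hS hSB,
    lintegral_image_eq_lintegral_abs_det_fderiv_mul _ hS hderiv hinj]
  refine setLIntegral_congr_fun hS fun y hy => ?_
  have hy1 := hlt y hy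
  have hA := one_sub_norm_sq_pos ha
  have hY := one_sub_norm_sq_pos hy1
  have hp := one_sub_inner_pos ha hy1
  have hc := div_pos (Real.sqrt_pos.2 hA) hp
  have hfac : 1 - ‖kleinInvolution a y‖ ^ 2 =
      (√(1 - ‖a‖ ^ 2) / (1 - ⟪a, y⟫)) ^ 2 * (1 - ‖y‖ ^ 2) := by
    rw [one_sub_norm_sq_kleinInvolution ha hy1, div_pow, Real.sq_sqrt hA.le]
    ring
  rw [← ENNReal.ofReal_mul (abs_nonneg _), det_kleinInvolutionFDeriv ha hy1, hfac,
    finrank_euclideanSpace_fin, Real.mul_rpow (sq_nonneg _) hY.le, ← mul_assoc]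
  generalize √(1 - ‖a‖ ^ 2) / (1 - ⟪a, y⟫) = c at hc ⊢
  rw [← Real.rpow_natCast c (n + 1), ← Real.rpow_natCast c 2, ← Real.rpow_mul hc.le,
    ← Real.rpow_add hc]
  have hexp : ((n + 1 : ℕ) : ℝ) + ((2 : ℕ) : ℝ) * (-((n : ℝ) + 1) / 2) = 0 := by
    push_cast
    ring
  rw [hexp, Real.rpow_zero, one_mul]

lemma dK_kleinInvolution {n : ℕ} {a y : EuclideanSpace ℝ (Fin n)} (ha : ‖a‖ < 1)
    (hy : ‖y‖ < 1) : dK a (kleinInvolution a y) = dK 0 y := by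
  have hA := one_sub_norm_sq_pos ha
  have hY := one_sub_norm_sq_pos hy
  have hp := one_sub_inner_pos ha hy
  have hfac : (1 - ‖a‖ ^ 2) * ((1 - ‖a‖ ^ 2) * (1 - ‖y‖ ^ 2) / (1 - ⟪a, y⟫) ^ 2) =
      ((1 - ‖a‖ ^ 2) / (1 - ⟪a, y⟫)) ^ 2 * (1 - ‖y‖ ^ 2) := by
    field_simp
  rw [dK, dK, one_sub_inner_kleinInvolution ha hy, one_sub_norm_sq_kleinInvolution ha hy, hfac,
    Real.sqrt_mul (sq_nonneg _), Real.sqrt_sq (div_pos hA hp).le,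
    ← div_div, div_self (div_pos hA hp).ne']
  simp

lemma measurable_dK {n : ℕ} (x : EuclideanSpace ℝ (Fin n)) : Measurable (dK x) := by
  unfold dK arcosh
  fun_prop

theorem hypVol_ball_eq_of_center (n : ℕ) (hn : 1 ≤ n)
    (x : EuclideanSpace ℝ (Fin n)) (hx : x ∈ ball (0 : EuclideanSpace ℝ (Fin n)) 1)
    (r : ℝ) (hr : 0 < r) :
    hypVol n {y ∈ ball (0 : EuclideanSpace ℝ (Fin n)) 1 | dK x y < r} =
      hypVol n {y ∈ ball (0 : EuclideanSpace ℝ (Fin n)) 1 | dK 0 y < r} := by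
  have hx1 : ‖x‖ < 1 := mem_ball_zero_iff.1 hx
  have hmeas : MeasurableSet {y ∈ ball (0 : EuclideanSpace ℝ (Fin n)) 1 | dK 0 y < r} :=
    measurableSet_ball.inter (measurableSet_lt (measurable_dK 0) measurable_const)
  rw [← hypVol_image_kleinInvolution hx1 hmeas fun _ hy => hy.1]
  congr 1
  ext z
  constructor
  · rintro ⟨hz, hzr⟩
    have hz1 := mem_ball_zero_iff.1 hz
    have hTz := norm_kleinInvolution_lt_one hx1 hz1
    refine ⟨kleinInvolution x z, ⟨mem_ball_zero_iff.2 hTz, ?_⟩,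
      kleinInvolution_kleinInvolution hx1 hz1⟩
    rwa [← dK_kleinInvolution hx1 hTz, kleinInvolution_kleinInvolution hx1 hz1]
  · rintro ⟨y, ⟨hy, hyr⟩, rfl⟩
    have hy1 := mem_ball_zero_iff.1 hy
    exact ⟨mem_ball_zero_iff.2 (norm_kleinInvolution_lt_one hx1 hy1),
      (dK_kleinInvolution hx1 hy1).trans_lt hyr⟩
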